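/- Let s_λ be a spectral regularization function family satisfying sup_{t ∈ σ(A*A)} |t s_λ(t)| ≤ D uniformly in λ, sup_λ sup_t |λ s_λ(t)| ≤ E, and qualification q ≥ r (i.e. sup_t |t^ν(1 − t s_λ(t))| ≤ C_ν λ^ν for 0 ≤ ν ≤ q). Let f̂_n^λ = s_λ(A*A) A*_x y with A*_x y = (1/n) Σ_{j=1}^n Y_j φ_{X_j}, under the model E(Y|X=x) = (Af†)(x) and Var(Y|X=x) = σ². Assume the source condition f† = (A*A)^r w with ‖w‖ ≤ R and r ≤ q, and the eigenvalue decay μ_j ≤ d/j^b (b > 1, d > 0) for the eigenvalues μ_j of A*A. Then E(‖f̂_n^λ − f†‖²) ≤ C_r² λ^{2r} R² + (C/n) L λ^{-(1+1/b)} for constants C (depending on σ²) and L (depending on D, E, d, b); consequently, with λ ∈ Θ(n^{-1/(2r+1+1/b)}), E(‖f̂_n^λ − f†‖²) ∈ O(n^{-2r/(2r+1+1/b)}). -/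

import Mathlib

open MeasureTheory ProbabilityTheory Filter Topology Asymptotics RealInnerProductSpace
open scoped ENNReal


lemma var_bound {Ω H : Type*} [MeasurableSpace Ω] (P : Measure Ω) [IsProbabilityMeasure P]
    [NormedAddCommGroup H] [InnerProductSpace ℝ H] [CompleteSpace H]
    [MeasurableSpace H] [BorelSpace H] (g : Ω → H) (hg : MemLp g 2 P) (c : H)
    (n : ℕ) (hn : 0 < n) :
    ∫ z : Fin n → Ω, ‖(n : ℝ)⁻¹ • ∑ i, g (z i) - c‖ ^ 2 ∂(Measure.pi fun _ : Fin n => P) ≤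
      ‖(∫ x, g x ∂P) - c‖ ^ 2 + (n : ℝ)⁻¹ * ∫ x, ‖g x‖ ^ 2 ∂P := by
  set m := ∫ x, g x ∂P with hm
  set h : Ω → H := fun x => g x - m with hh
  have hgi : Integrable g P := hg.integrable (by norm_num)
  have hmem : MemLp h 2 P := hg.sub (memLp_const m)
  have hhi : Integrable h P := hmem.integrable (by norm_num)
  have hh0 : ∫ x, h x ∂P = 0 := by
    rw [hh, integral_sub hgi (integrable_const m)]; simp [hm]
  set Q := Measure.pi fun _ : Fin n => P with hQ
  have mp : ∀ i : Fin n, MeasurePreserving (fun z : Fin n → Ω => z i) Q P :=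
    fun i => measurePreserving_eval _ i
  have hmi : ∀ i, MemLp (fun z : Fin n → Ω => h (z i)) 2 Q :=
    fun i => hmem.comp_measurePreserving (mp i)
  have hii : ∀ i, Integrable (fun z : Fin n → Ω => h (z i)) Q :=
    fun i => (hmi i).integrable (by norm_num)
  have hintg : ∀ (f : Ω → ℝ) (hf : AEStronglyMeasurable f P) (i : Fin n),
      ∫ z, f (z i) ∂Q = ∫ x, f x ∂P := by
    intro f hf i
    have hf' : AEStronglyMeasurable f (Q.map (fun z : Fin n → Ω => z i)) := by
      rw [(mp i).map_eq]; exact hf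
    rw [← (mp i).map_eq, integral_map (mp i).measurable.aemeasurable hf']
  have hintH : ∀ (i : Fin n),
      ∫ z, h (z i) ∂Q = 0 := by
    intro i
    have hf' : AEStronglyMeasurable h (Q.map (fun z : Fin n → Ω => z i)) := by
      rw [(mp i).map_eq]; exact hhi.1
    rw [← hh0, ← (mp i).map_eq, integral_map (mp i).measurable.aemeasurable hf']
  have hcross : ∀ i j, Integrable (fun z : Fin n → Ω => ⟪h (z i), h (z j)⟫) Q := by
    intro i j
    refine ((hmi i).norm.integrable_mul (hmi j).norm).mono' ((hmi i).1.inner (hmi j).1) ?_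
    exact Eventually.of_forall fun z => norm_inner_le_norm _ _
  have hlin : ∀ i, Integrable (fun z : Fin n → Ω => ⟪h (z i), m - c⟫) Q := by
    intro i
    exact (hii i).inner_const _
  have hcv : ∀ i j, ∫ z, ⟪h (z i), h (z j)⟫ ∂Q = if i = j then ∫ x, ‖h x‖ ^ 2 ∂P else 0 := by
    intro i j
    split_ifs with hij
    · subst hij
      simp_rw [real_inner_self_eq_norm_sq]
      exact hintg (fun x => ‖h x‖ ^ 2) (hhi.1.norm.pow 2) i
    · have hind : IndepFun (fun z : Fin n → Ω => h (z i)) (fun z => h (z j)) Q :=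
        (iIndepFun_pi (μ := fun _ : Fin n => P) (X := fun _ => h)
          fun i => hhi.aemeasurable).indepFun hij
      have := hind.integral_bilin (hii i) (hii j) (innerSL ℝ)
      rw [hintH i] at this
      exact Eq.trans rfl (this.trans (by simp))
  have hlv : ∀ i, ∫ z, ⟪h (z i), m - c⟫ ∂Q = 0 := by
    intro i
    simp_rw [real_inner_comm (m - c)]
    rw [integral_inner (hii i), hintH i]; simp
  have hn' : (n : ℝ) ≠ 0 := by positivity
  have hpt : ∀ z : Fin n → Ω, ‖(n : ℝ)⁻¹ • ∑ i, g (z i) - c‖ ^ 2 =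
      (n : ℝ)⁻¹ ^ 2 * (∑ i, ∑ j, ⟪h (z i), h (z j)⟫) +
        (2 * (n : ℝ)⁻¹ * (∑ i, ⟪h (z i), m - c⟫) + ‖m - c‖ ^ 2) := by
    intro z
    have : (n : ℝ)⁻¹ • ∑ i, g (z i) - c = (n : ℝ)⁻¹ • ∑ i, h (z i) + (m - c) := by
      simp only [hh, Finset.sum_sub_distrib, smul_sub, Finset.sum_const, Finset.card_univ,
        Fintype.card_fin]
      rw [← Nat.cast_smul_eq_nsmul ℝ, smul_smul, inv_mul_cancel₀ hn', one_smul]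
      abel
    rw [this, norm_add_sq_real, norm_smul, mul_pow, ← real_inner_self_eq_norm_sq (∑ i, h (z i)),
      sum_inner, inner_smul_left, sum_inner]
    simp_rw [inner_sum]
    simp
    ring
  simp_rw [hpt]
  rw [integral_add, integral_add, integral_const_mul, integral_const_mul, integral_finsetSum,
    integral_finsetSum]
  · simp_rw [hlv]
    have : ∀ i : Fin n, ∫ z, ∑ j, ⟪h (z i), h (z j)⟫ ∂Q = ∫ x, ‖h x‖ ^ 2 ∂P := by
      intro i
      rw [integral_finsetSum _ (fun j _ => hcross i j)]
      simp_rw [hcv]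
      simp
    simp_rw [this]
    have hle : ∫ x, ‖h x‖ ^ 2 ∂P ≤ ∫ x, ‖g x‖ ^ 2 ∂P := by
      have e1 : ∀ x, ‖h x‖ ^ 2 = ‖g x‖ ^ 2 - 2 * ⟪m, g x⟫ + ‖m‖ ^ 2 := by
        intro x
        rw [hh]
        simp only
        rw [norm_sub_sq_real, real_inner_comm]
      have i1 : Integrable (fun x => ‖g x‖ ^ 2) P := hg.integrable_norm_pow (by norm_num)
      have i2 : Integrable (fun x => 2 * ⟪m, g x⟫) P := (hgi.const_inner m).const_mul 2
      simp_rw [e1]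
      rw [integral_add (f := fun x => ‖g x‖ ^ 2 - 2 * ⟪m, g x⟫) (i1.sub i2) (integrable_const _), integral_sub i1 i2, integral_const_mul,
        integral_inner hgi, ← hm, real_inner_self_eq_norm_sq]
      simp
      nlinarith [sq_nonneg ‖m‖]
    simp
    have e2 : ((n : ℝ) ^ 2)⁻¹ * (n * ∫ x, ‖h x‖ ^ 2 ∂P) = (n : ℝ)⁻¹ * ∫ x, ‖h x‖ ^ 2 ∂P := by
      field_simp
    rw [e2, add_comm]
    gcongr
  · exact fun i _ => hlin i
  · exact fun i _ => integrable_finsetSum _ fun j _ => hcross i j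
  · exact (integrable_finsetSum _ fun i _ => hlin i).const_mul _
  · exact integrable_const _
  · exact (integrable_finsetSum _ fun i _ => integrable_finsetSum _ fun j _ =>
      hcross i j).const_mul _
  · exact ((integrable_finsetSum _ fun i _ => hlin i).const_mul _).add (integrable_const _)

lemma step_bound (b x : ℝ) (hb : 1 < b) (hx : 0 < x) :
    (b - 1) * (x + 1) ^ (-b) ≤ x ^ (1 - b) - (x + 1) ^ (1 - b) := by
  have hy : 0 < x + 1 := by linarith
  have h1 : x ^ (1 - b) = (x + 1) ^ (1 - b) * (x / (x + 1)) ^ (1 - b) := by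
    rw [← Real.mul_rpow hy.le (by positivity)]
    congr 1; field_simp
  have h2 : (x + 1) ^ (-b) = (x + 1) ^ (1 - b) * (1 / (x + 1)) := by
    rw [show -b = (1 - b) - 1 by ring, Real.rpow_sub_one hy.ne']; ring
  have h3 : 1 + (b - 1) * (1 / (x + 1)) ≤ (x / (x + 1)) ^ (1 - b) := by
    have hu : 0 < x / (x + 1) := by positivity
    rw [Real.rpow_def_of_pos hu]
    have hl := Real.log_le_sub_one_of_pos hu
    have e : x / (x + 1) - 1 = - (1 / (x + 1)) := by field_simp; ring
    rw [e] at hl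
    have := Real.add_one_le_exp (Real.log (x / (x + 1)) * (1 - b))
    nlinarith
  have h4 : 0 < (x + 1) ^ (1 - b) := by positivity
  rw [h1, h2]
  nlinarith

lemma tail_bound (b : ℝ) (hb : 1 < b) (N : ℕ) (hN : 0 < N) :
    ∑' j : ℕ, (((j + N : ℕ) : ℝ) + 1) ^ (-b) ≤ (N : ℝ) ^ (1 - b) / (b - 1) := by
  have hb' : 0 < b - 1 := by linarith
  refine Real.tsum_le_of_sum_range_le (fun j => by positivity) fun k => ?_
  have : ∑ j ∈ Finset.range k, (((j + N : ℕ) : ℝ) + 1) ^ (-b) ≤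
      ((N : ℝ) ^ (1 - b) - ((k + N : ℕ) : ℝ) ^ (1 - b)) / (b - 1) := by
    induction k with
    | zero => simp
    | succ k ih =>
      rw [Finset.sum_range_succ]
      have h := step_bound b ((k + N : ℕ) : ℝ) hb (by positivity)
      have h' : (((k + N : ℕ) : ℝ) + 1) ^ (-b) ≤
          (((k + N : ℕ) : ℝ) ^ (1 - b) - ((k + 1 + N : ℕ) : ℝ) ^ (1 - b)) / (b - 1) := by
        rw [le_div_iff₀ hb']
        have e : ((k + 1 + N : ℕ) : ℝ) = ((k + N : ℕ) : ℝ) + 1 := by push_cast; ring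
        rw [e]; linarith
      refine (add_le_add ih h').trans (le_of_eq ?_)
      ring
  refine this.trans ?_
  gcongr
  have : 0 ≤ ((k + N : ℕ) : ℝ) ^ (1 - b) := by positivity
  linarith

lemma sum_bound (b : ℝ) (hb : 1 < b) (p c : ℝ) (hp : 0 ≤ p) (hc : 0 ≤ c) :
    ∃ L : ℝ, 0 ≤ L ∧ ∀ l : ℝ, 0 < l → ∀ a : ℕ → ℝ, (∀ j, 0 ≤ a j) → (∀ j, a j ≤ p / l) →
      (∀ j, a j ≤ c / l ^ 2 * ((j : ℝ) + 1) ^ (-b)) →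
      Summable a ∧ ∑' j, a j ≤ L * l ^ (-(1 + 1 / b)) := by
  have hb0 : 0 < b := by linarith
  have hb1 : 0 < b - 1 := by linarith
  have hS : Summable fun j : ℕ => ((j : ℝ) + 1) ^ (-b) := by
    have := (summable_nat_add_iff 1).2 (Real.summable_nat_rpow.2 (by linarith : -b < -1))
    simpa using this
  set Z := ∑' j : ℕ, ((j : ℝ) + 1) ^ (-b) with hZ
  have hZ0 : 0 ≤ Z := tsum_nonneg fun j => by positivity
  refine ⟨2 * p + c / (b - 1) + c * Z, by positivity, ?_⟩
  intro l hl a ha h1 h2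
  have hsa : Summable a := Summable.of_nonneg_of_le ha h2 (hS.mul_left _)
  refine ⟨hsa, ?_⟩
  have hpos : 0 < l ^ (-(1 + 1 / b)) := by positivity
  rcases le_total 1 l with h | h
  · have : ∑' j, a j ≤ c / l ^ 2 * Z := by
      rw [hZ, ← tsum_mul_left]
      exact hsa.tsum_le_tsum h2 (hS.mul_left _)
    have e : 1 / l ^ 2 ≤ l ^ (-(1 + 1 / b)) := by
      have : 1 / l ^ 2 = l ^ (-2 : ℝ) := by
        rw [Real.rpow_neg hl.le]; norm_cast; simp
      rw [this]
      apply Real.rpow_le_rpow_of_exponent_le h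
      have : 1 / b ≤ 1 := by rw [div_le_one hb0]; exact hb.le
      linarith
    calc _ ≤ _ := this
      _ = (c * Z) * (1 / l ^ 2) := by ring
      _ ≤ (c * Z) * l ^ (-(1 + 1 / b)) := by gcongr
      _ ≤ _ := by
        gcongr
        have : 0 ≤ 2 * p + c / (b - 1) := by positivity
        linarith
  · set t := l ^ (-(1 / b)) with ht
    have ht1 : 1 ≤ t := Real.one_le_rpow_of_pos_of_le_one_of_nonpos hl h
      (by have : 0 < 1 / b := by positivity
          linarith)
    set N := ⌈t⌉₊ with hN
    have hNt : t ≤ N := Nat.le_ceil t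
    have hN2 : (N : ℝ) ≤ 2 * t := by
      have := Nat.ceil_lt_add_one (by linarith : 0 ≤ t)
      linarith
    have hN0 : 0 < N := Nat.ceil_pos.2 (by linarith)
    rw [← hsa.sum_add_tsum_nat_add N]
    have el : l ^ (-(1 + 1 / b)) = t / l := by
      rw [ht, ← Real.rpow_sub_one hl.ne']; congr 1; ring
    have p1 : ∑ j ∈ Finset.range N, a j ≤ 2 * p * (t / l) := by
      calc _ ≤ ∑ j ∈ Finset.range N, p / l := Finset.sum_le_sum fun j _ => h1 j
        _ = N * (p / l) := by simp
        _ ≤ (2 * t) * (p / l) := by gcongr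
        _ = _ := by ring
    have p2 : ∑' j, a (j + N) ≤ c / (b - 1) * (t / l) := by
      have hS' := (summable_nat_add_iff N).2 hS
      calc _ ≤ ∑' j : ℕ, c / l ^ 2 * (((j + N : ℕ) : ℝ) + 1) ^ (-b) :=
            Summable.tsum_le_tsum (fun j => h2 (j + N)) ((summable_nat_add_iff N).2 hsa)
              (hS'.mul_left _)
        _ = c / l ^ 2 * ∑' j : ℕ, (((j + N : ℕ) : ℝ) + 1) ^ (-b) := tsum_mul_left
        _ ≤ c / l ^ 2 * ((N : ℝ) ^ (1 - b) / (b - 1)) := by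
            gcongr; exact tail_bound b hb N hN0
        _ ≤ c / l ^ 2 * (t ^ (1 - b) / (b - 1)) := by
            gcongr c / l ^ 2 * (?_ / (b - 1))
            exact Real.rpow_le_rpow_of_nonpos (by linarith) hNt (by linarith)
        _ = _ := by
            have : t ^ (1 - b) = t * l := by
              rw [sub_eq_add_neg, Real.rpow_add (by linarith), Real.rpow_one, ht,
                ← Real.rpow_mul hl.le]
              congr 1
              rw [show -(1 / b) * -b = 1 by field_simp, Real.rpow_one]
            rw [this]; field_simp
    rw [el]
    have : 0 ≤ c * Z * (t / l) := by positivity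
    nlinarith

lemma inner_diag {H : Type*} [NormedAddCommGroup H] [InnerProductSpace ℝ H] 
    (e : HilbertBasis ℕ ℝ H) (T : H →L[ℝ] H) (t : ℕ → ℝ) (hT : ∀ j, T (e j) = t j • e j)
    (v : H) (j : ℕ) : ⟪T v, e j⟫ = t j * ⟪v, e j⟫ := by
  have h := ((e.hasSum_repr v).mapL T).mapL (innerSL ℝ (e j))
  have h2 : HasSum (fun i => if i = j then t j * ⟪v, e j⟫ else 0) (t j * ⟪v, e j⟫) :=
    hasSum_ite_eq j _
  rw [real_inner_comm]
  refine HasSum.unique (f := fun i => (innerSL ℝ (e j)) (T (e.repr v i • e i))) h ?_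
  convert h2 using 2 with i
  rw [map_smul, hT]
  have : (innerSL ℝ (e j)) (e.repr v i • t i • e i) = ⟪e j, e.repr v i • t i • e i⟫ := rfl
  rw [this, inner_smul_right, inner_smul_right, orthonormal_iff_ite.1 e.orthonormal,
    e.repr_apply_apply]
  by_cases hij : i = j
  · subst hij; simp [real_inner_comm, mul_comm]
  · simp [hij, Ne.symm hij]

lemma parseval {H : Type*} [NormedAddCommGroup H] [InnerProductSpace ℝ H]
    (e : HilbertBasis ℕ ℝ H) (v : H) : HasSum (fun j => ⟪v, e j⟫ ^ 2) (‖v‖ ^ 2) := by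
  have := e.hasSum_inner_mul_inner v v
  rw [real_inner_self_eq_norm_sq] at this
  have h2 : (fun j => ⟪v, e j⟫ ^ 2) = fun j => ⟪v, e j⟫ * ⟪e j, v⟫ := by
    funext j
    rw [real_inner_comm v (e j), sq]
  rw [h2]
  exact this

lemma second_countable {H : Type*} [NormedAddCommGroup H] [InnerProductSpace ℝ H]
    (e : HilbertBasis ℕ ℝ H) : SecondCountableTopology H := by
  have h : TopologicalSpace.IsSeparable (Set.univ : Set H) := by
    have h1 := ((Set.countable_range e).isSeparable.span (R := ℝ)).closure
    rw [← Submodule.topologicalClosure_coe, e.dense_span] at h1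
    simpa using h1
  have := TopologicalSpace.isSeparable_univ_iff.1 h
  exact UniformSpace.secondCountable_of_separable H

lemma bias_bound {H : Type*} [NormedAddCommGroup H] [InnerProductSpace ℝ H]
    (e : HilbertBasis ℕ ℝ H) (B S : H →L[ℝ] H) (μ t : ℕ → ℝ)
    (hB : ∀ j, B (e j) = μ j • e j) (hS : ∀ j, S (e j) = t j • e j) (f w : H) (r R K : ℝ)
    (hK : ∀ j, |μ j ^ r * (1 - μ j * t j)| ≤ K) (hR : ‖w‖ ≤ R)
    (hsource : ∀ j : ℕ, ⟪f, e j⟫ = μ j ^ r * ⟪w, e j⟫) :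
    ‖S (B f) - f‖ ^ 2 ≤ K ^ 2 * R ^ 2 := by
  have h1 := parseval e (S (B f) - f)
  have h2 := (parseval e w).mul_left (K ^ 2)
  have h3 : ‖S (B f) - f‖ ^ 2 ≤ K ^ 2 * ‖w‖ ^ 2 := by
    refine hasSum_le (fun j => ?_) h1 h2
    rw [inner_sub_left, inner_diag e S t hS, inner_diag e B μ hB, hsource]
    have e1 : (t j * (μ j * (μ j ^ r * ⟪w, e j⟫)) - μ j ^ r * ⟪w, e j⟫) ^ 2 =
        (μ j ^ r * (1 - μ j * t j)) ^ 2 * ⟪w, e j⟫ ^ 2 := by ring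
    rw [e1]
    refine mul_le_mul_of_nonneg_right ?_ (sq_nonneg _)
    rw [← sq_abs]
    exact pow_le_pow_left₀ (abs_nonneg _) (hK j) 2
  refine h3.trans ?_
  gcongr

lemma second_moment (P : Measure ℝ) [IsProbabilityMeasure P] (m σ : ℝ) (hσ : 0 < σ)
    (hmean : ∫ z, z ∂P = m) (hvar : ∫ z, (z - m) ^ 2 ∂P = σ ^ 2) :
    Integrable (fun z => z) P ∧ Integrable (fun z => z ^ 2) P ∧
      ∫ z, z ^ 2 ∂P = σ ^ 2 + m ^ 2 := by
  have hi : Integrable (fun z => (z - m) ^ 2) P := by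
    by_contra h
    rw [integral_undef h] at hvar
    have : 0 < σ ^ 2 := by positivity
    linarith
  have hL : MemLp (fun z => z - m) 2 P :=
    (memLp_two_iff_integrable_sq (by fun_prop)).2 hi
  have hL' : MemLp (fun z : ℝ => z) 2 P := by
    have := hL.add (memLp_const (μ := P) (p := 2) m)
    simpa [Pi.add_def] using this
  have i1 : Integrable (fun z : ℝ => z) P := hL'.integrable (by norm_num)
  have i2 : Integrable (fun z : ℝ => z ^ 2) P := hL'.integrable_sq
  refine ⟨i1, i2, ?_⟩
  have e1 : ∀ z : ℝ, z ^ 2 = (z - m) ^ 2 + (2 * m * z - m ^ 2) := fun z => by ring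
  rw [integral_congr_ae (Eventually.of_forall e1)]
  rw [integral_add (g := fun z => 2 * m * z - m ^ 2) hi ((i1.const_mul _).sub (integrable_const _)), hvar,
    integral_sub (i1.const_mul _) (integrable_const _), integral_const_mul, hmean]
  simp
  ring

lemma model_memLp {H X : Type*}
    [NormedAddCommGroup H] [InnerProductSpace ℝ H]
    [MeasurableSpace H] [BorelSpace H] [SecondCountableTopology H]
    [MeasurableSpace X] (ν : Measure X) [IsProbabilityMeasure ν]
    (κ : Kernel X ℝ) [IsMarkovKernel κ]
    (φ : X → H) (hφ : Measurable φ) (Cφ : ℝ) (hC : ∀ x : X, ‖φ x‖ ≤ Cφ)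
    (f : H) (σ : ℝ) (hσ : 0 < σ)
    (hmean : ∀ᵐ x ∂ν, (∫ z, z ∂(κ x)) = ⟪f, φ x⟫)
    (hvar : ∀ᵐ x ∂ν, (∫ z, (z - ⟪f, φ x⟫) ^ 2 ∂(κ x)) = σ ^ 2)
    (T : H →L[ℝ] H) :
    MemLp (fun p : X × ℝ => T (p.2 • φ p.1)) 2 (ν ⊗ₘ κ) ∧
      ∫ p, ‖T (p.2 • φ p.1)‖ ^ 2 ∂(ν ⊗ₘ κ) ≤
        (σ ^ 2 + (‖f‖ * Cφ) ^ 2) * ∫ x, ‖T (φ x)‖ ^ 2 ∂ν := by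
  have hm : Measurable (fun p : X × ℝ => T (p.2 • φ p.1)) := by fun_prop
  have hTb : ∀ x, ‖T (φ x)‖ ≤ ‖T‖ * Cφ := fun x =>
    (T.le_opNorm _).trans (by gcongr; exact hC x)
  have hib : ∀ x, ⟪f, φ x⟫ ^ 2 ≤ (‖f‖ * Cφ) ^ 2 := fun x => by
    rw [← sq_abs]
    refine pow_le_pow_left₀ (abs_nonneg _) ?_ 2
    exact (abs_real_inner_le_norm _ _).trans (by gcongr; exact hC x)
  have hsm : ∀ᵐ x ∂ν, Integrable (fun z => z) (κ x) ∧ Integrable (fun z => z ^ 2) (κ x) ∧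
      ∫ z, z ^ 2 ∂(κ x) = σ ^ 2 + ⟪f, φ x⟫ ^ 2 := by
    filter_upwards [hmean, hvar] with x h1 h2
    exact second_moment (κ x) _ σ hσ h1 h2
  have hn : ∀ x (z : ℝ), ‖T (z • φ x)‖ ^ 2 = z ^ 2 * ‖T (φ x)‖ ^ 2 := by
    intro x z
    rw [map_smul, norm_smul, mul_pow]; simp
  have hT2 : Integrable (fun x => ‖T (φ x)‖ ^ 2) ν := by
    refine Integrable.of_bound (by fun_prop) ((‖T‖ * Cφ) ^ 2) (Eventually.of_forall fun x => ?_)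
    rw [Real.norm_of_nonneg (by positivity)]
    exact pow_le_pow_left₀ (norm_nonneg _) (hTb x) 2
  have hprod : Integrable (fun x => (σ ^ 2 + ⟪f, φ x⟫ ^ 2) * ‖T (φ x)‖ ^ 2) ν := by
    refine Integrable.mono' (hT2.const_mul (σ ^ 2 + (‖f‖ * Cφ) ^ 2)) ?_
      (Eventually.of_forall fun x => ?_)
    · have : Measurable fun x => ⟪f, φ x⟫ := by fun_prop
      exact (((this.pow_const 2).const_add _).mul (by fun_prop)).aestronglyMeasurable
    · rw [Real.norm_of_nonneg (by positivity)]
      exact mul_le_mul_of_nonneg_right (by linarith [hib x]) (by positivity)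
  have hintg : Integrable (fun p : X × ℝ => ‖T (p.2 • φ p.1)‖ ^ 2) (ν ⊗ₘ κ) := by
    rw [Measure.integrable_compProd_iff (hm.norm.pow_const 2).aestronglyMeasurable]
    constructor
    · filter_upwards [hsm] with x hx
      simp_rw [hn]
      exact hx.2.1.mul_const _
    · refine hprod.congr ?_
      filter_upwards [hsm] with x hx
      simp_rw [hn, norm_mul, norm_pow, Real.norm_eq_abs, sq_abs]
      rw [integral_mul_const, hx.2.2]
  refine ⟨(memLp_two_iff_integrable_sq_norm hm.aestronglyMeasurable).2 hintg, ?_⟩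
  rw [Measure.integral_compProd hintg, ← integral_const_mul]
  refine integral_mono_ae (hprod.congr ?_) (hT2.const_mul _) ?_
  · filter_upwards [hsm] with x hx
    simp_rw [hn]
    rw [integral_mul_const, hx.2.2]
  · filter_upwards [hsm] with x hx
    simp_rw [hn]
    rw [integral_mul_const, hx.2.2]
    exact mul_le_mul_of_nonneg_right (by linarith [hib x]) (by positivity)

lemma model_mean {H X : Type*}
    [NormedAddCommGroup H] [InnerProductSpace ℝ H] [CompleteSpace H]
    [MeasurableSpace H] [BorelSpace H] [SecondCountableTopology H]
    [MeasurableSpace X] (ν : Measure X) [IsProbabilityMeasure ν]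
    (κ : Kernel X ℝ) [IsMarkovKernel κ]
    (φ : X → H) (hφ : Measurable φ) (Cφ : ℝ) (hC : ∀ x : X, ‖φ x‖ ≤ Cφ)
    (f : H) (σ : ℝ) (hσ : 0 < σ)
    (hmean : ∀ᵐ x ∂ν, (∫ z, z ∂(κ x)) = ⟪f, φ x⟫)
    (hvar : ∀ᵐ x ∂ν, (∫ z, (z - ⟪f, φ x⟫) ^ 2 ∂(κ x)) = σ ^ 2)
    (B : H →L[ℝ] H) (hB : ∀ f g : H, ⟪B f, g⟫ = ∫ x, ⟪f, φ x⟫ * ⟪g, φ x⟫ ∂ν)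
    (T : H →L[ℝ] H) :
    ∫ p, T (p.2 • φ p.1) ∂(ν ⊗ₘ κ) = T (B f) := by
  have h := (model_memLp ν κ φ hφ Cφ hC f σ hσ hmean hvar (ContinuousLinearMap.id ℝ H)).1
  have hi : Integrable (fun p : X × ℝ => p.2 • φ p.1) (ν ⊗ₘ κ) := h.integrable (by norm_num)
  rw [T.integral_comp_comm hi]
  congr 1
  refine ext_inner_left ℝ fun v => ?_
  rw [← integral_inner hi, Measure.integral_compProd (hi.const_inner v), real_inner_comm, hB]
  refine integral_congr_ae ?_
  filter_upwards [hmean] with x hx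
  simp_rw [inner_smul_right]
  rw [integral_mul_const, hx]

lemma integral_norm_sq {H X : Type*}
    [NormedAddCommGroup H] [InnerProductSpace ℝ H]
    [MeasurableSpace H] [BorelSpace H] [SecondCountableTopology H]
    [MeasurableSpace X] (ν : Measure X) [IsProbabilityMeasure ν]
    (φ : X → H) (hφ : Measurable φ) (Cφ : ℝ) (hC : ∀ x : X, ‖φ x‖ ≤ Cφ)
    (e : HilbertBasis ℕ ℝ H) (B S : H →L[ℝ] H) (μ t : ℕ → ℝ)
    (heig : ∀ j, B (e j) = μ j • e j) (hS : ∀ j, S (e j) = t j • e j)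
    (hB : ∀ f g : H, ⟪B f, g⟫ = ∫ x, ⟪f, φ x⟫ * ⟪g, φ x⟫ ∂ν)
    (hsum : Summable fun j => t j ^ 2 * μ j) :
    ∫ x, ‖S (φ x)‖ ^ 2 ∂ν = ∑' j, t j ^ 2 * μ j := by
  have hintg : ∀ j, ∫ x, ⟪S (φ x), e j⟫ ^ 2 ∂ν = t j ^ 2 * μ j := by
    intro j
    simp_rw [inner_diag e S t hS, mul_pow]
    rw [integral_const_mul]
    congr 1
    have h := hB (e j) (e j)
    rw [heig, inner_smul_left, orthonormal_iff_ite.1 e.orthonormal] at h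
    simp only [if_true, mul_one] at h
    refine Eq.trans ?_ h.symm
    refine integral_congr_ae (Eventually.of_forall fun x => ?_)
    simp only
    rw [real_inner_comm, sq]
  have hii : ∀ j, Integrable (fun x => ⟪S (φ x), e j⟫ ^ 2) ν := by
    intro j
    have hm : Measurable (fun x => ⟪S (φ x), e j⟫) := by fun_prop
    refine Integrable.of_bound (hm.pow_const 2).aestronglyMeasurable ((‖S‖ * Cφ) ^ 2)
      (Eventually.of_forall fun x => ?_)
    rw [norm_pow]
    refine pow_le_pow_left₀ (norm_nonneg _) ?_ 2
    refine (norm_inner_le_norm _ _).trans ?_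
    rw [e.orthonormal.1 j, mul_one]
    exact (S.le_opNorm _).trans (by gcongr; exact hC x)
  have h := hasSum_integral_of_summable_integral_norm hii (by
    simpa only [norm_pow, Real.norm_eq_abs, sq_abs, hintg] using hsum)
  simp_rw [hintg] at h
  rw [h.tsum_eq]
  refine integral_congr_ae (Eventually.of_forall fun x => ?_)
  exact (parseval e (S (φ x))).tsum_eq.symm

/-- **Upper rate for spectral regularization in the statistical learning setting.**
Let `s_λ` be a spectral regularization family (with `|t s_λ(t)| ≤ D`, `|λ s_λ(t)| ≤ E` and
qualification `q ≥ r`: `|t^ν (1 − t s_λ(t))| ≤ C_ν λ^ν` for `0 ≤ ν ≤ q`, on the spectrum of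
`B = A*A`, here expressed on the eigenvalues `μ_j` of `B` in an eigenbasis `(e_j)`), and let
`f̂_n^λ = s_λ(B) A*_x y` with `A*_x y = (1/n) Σ_j Y_j φ_{X_j}`, under the model
`E(Y|X=x) = (A f†)(x) = ⟪f†, φ_x⟫` and `Var(Y|X=x) = σ²`.  Assume the source condition
`f† = B^r w` with `‖w‖ ≤ R`, `r ≤ q`, and the eigenvalue decay `μ_j ≤ d/j^b` (`b > 1`,
`d > 0`).  Then `E(‖f̂_n^λ − f†‖²) ≤ C_r² λ^{2r} R² + (C/n) L λ^{-(1+1/b)}` for constants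
`C` (depending on `σ²`) and `L` (depending on `D`, `E`, `d`, `b`); consequently, with
`λ ∈ Θ(n^{-1/(2r+1+1/b)})`, `E(‖f̂_n^λ − f†‖²) ∈ O(n^{-2r/(2r+1+1/b)})`. -/
theorem stmt18
    {H1 X : Type*}
    [NormedAddCommGroup H1] [InnerProductSpace ℝ H1] [CompleteSpace H1]
    [MeasurableSpace H1] [BorelSpace H1]
    [MeasurableSpace X]
    -- the sampling distribution: marginal `ν` and conditional distribution `κ`
    (ν : Measure X) [IsProbabilityMeasure ν]
    (κ : Kernel X ℝ) [IsMarkovKernel κ]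
    -- the feature map `φ`, with `(A f)(x) = ⟪f, φ x⟫` and `sup_x ‖φ x‖ < ∞`
    (φ : X → H1) (hφmeas : Measurable φ) (hφbdd : ∃ Cφ : ℝ, ∀ x : X, ‖φ x‖ ≤ Cφ)
    -- the operator `B = A*A`, diagonalized by the Hilbert basis `(e_j)` with
    -- eigenvalues `μe_j ≥ 0`
    (B : H1 →L[ℝ] H1) (e : HilbertBasis ℕ ℝ H1) (μe : ℕ → ℝ)
    (hμnonneg : ∀ j : ℕ, 0 ≤ μe j)
    (heig : ∀ j : ℕ, B (e j) = μe j • e j)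
    (hB : ∀ f g : H1, ⟪B f, g⟫ = ∫ x, ⟪f, φ x⟫ * ⟪g, φ x⟫ ∂ν)
    -- eigenvalue decay `μ_j ≤ d / j^b`
    (d b : ℝ) (hd : 0 < d) (hb : 1 < b)
    (hdecay : ∀ j : ℕ, μe j ≤ d / ((j : ℝ) + 1) ^ b)
    -- the spectral regularization function family `s_λ` and its properties
    (s : ℝ → ℝ → ℝ) (D E q : ℝ) (hq : 0 < q)
    (hD : ∀ l : ℝ, 0 < l → ∀ j : ℕ, |μe j * s l (μe j)| ≤ D)
    (hE : ∀ l : ℝ, 0 < l → ∀ j : ℕ, |l * s l (μe j)| ≤ E)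
    (Cq : ℝ → ℝ)
    (hqual : ∀ νe : ℝ, 0 ≤ νe → νe ≤ q → ∀ l : ℝ, 0 < l → ∀ j : ℕ,
      |μe j ^ νe * (1 - μe j * s l (μe j))| ≤ Cq νe * l ^ νe)
    -- the operators `s_λ(B)`, diagonal in the eigenbasis
    (Sop : ℝ → H1 →L[ℝ] H1)
    (hSop : ∀ (l : ℝ) (j : ℕ), Sop l (e j) = s l (μe j) • e j)
    -- the source condition `f† = B^r w`, `‖w‖ ≤ R`, `r ≤ q`
    (fdag w : H1) (r R : ℝ) (hr : 0 < r) (hrq : r ≤ q) (hR : ‖w‖ ≤ R)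
    (hsource : ∀ j : ℕ, ⟪fdag, e j⟫ = μe j ^ r * ⟪w, e j⟫)
    -- the statistical model: conditional mean `⟪f†, φ x⟫` and conditional variance `σ²`
    (σ : ℝ) (hσ : 0 < σ)
    (hmean : ∀ᵐ x ∂ν, (∫ z, z ∂(κ x)) = ⟪fdag, φ x⟫)
    (hvar : ∀ᵐ x ∂ν, (∫ z, (z - ⟪fdag, φ x⟫) ^ 2 ∂(κ x)) = σ ^ 2) :
    -- the bias–variance upper bound, for constants `C` and `L`
    (∃ C : ℝ, 0 ≤ C ∧ ∃ L : ℝ, 0 ≤ L ∧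
      ∀ n : ℕ, 0 < n → ∀ l : ℝ, 0 < l →
        (∫ z : Fin n → X × ℝ,
            ‖Sop l ((n : ℝ)⁻¹ • ∑ i, (z i).2 • φ (z i).1) - fdag‖ ^ 2
            ∂(Measure.pi fun _ : Fin n => ν ⊗ₘ κ)) ≤
          (Cq r) ^ 2 * l ^ (2 * r) * R ^ 2 + C / n * L * l ^ (-(1 + 1 / b))) ∧
    -- consequently, the upper rate `O(n^{-2r/(2r+1+1/b)})` with
    -- `λ_n ∈ Θ(n^{-1/(2r+1+1/b)})`
    (∀ lamn : ℕ → ℝ, (∀ n : ℕ, 0 < lamn n) →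
      (lamn =Θ[atTop] fun n : ℕ => (n : ℝ) ^ (-(1 / (2 * r + 1 + 1 / b)))) →
      (fun n : ℕ =>
          ∫ z : Fin n → X × ℝ,
            ‖Sop (lamn n) ((n : ℝ)⁻¹ • ∑ i, (z i).2 • φ (z i).1) - fdag‖ ^ 2
            ∂(Measure.pi fun _ : Fin n => ν ⊗ₘ κ))
        =O[atTop] fun n : ℕ => (n : ℝ) ^ (-(2 * r / (2 * r + 1 + 1 / b)))) := by
  have hsc : SecondCountableTopology H1 := second_countable e
  obtain ⟨Cφ, hC⟩ := hφbdd
  have hD0 : 0 ≤ D := (abs_nonneg _).trans (hD 1 one_pos 0)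
  have hE0 : 0 ≤ E := (abs_nonneg _).trans (hE 1 one_pos 0)
  obtain ⟨L, hL0, hL⟩ := sum_bound b hb (D * E) (E ^ 2 * d) (by positivity) (by positivity)
  have hC0 : 0 ≤ σ ^ 2 + (‖fdag‖ * Cφ) ^ 2 := by positivity
  have main : ∀ n : ℕ, 0 < n → ∀ l : ℝ, 0 < l →
        (∫ z : Fin n → X × ℝ,
            ‖Sop l ((n : ℝ)⁻¹ • ∑ i, (z i).2 • φ (z i).1) - fdag‖ ^ 2
            ∂(Measure.pi fun _ : Fin n => ν ⊗ₘ κ)) ≤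
          (Cq r) ^ 2 * l ^ (2 * r) * R ^ 2 +
            (σ ^ 2 + (‖fdag‖ * Cφ) ^ 2) / n * L * l ^ (-(1 + 1 / b)) := by
    intro n hn l hl
    obtain ⟨hmem, hle⟩ := model_memLp ν κ φ hφmeas Cφ hC fdag σ hσ hmean hvar (Sop l)
    have hmn := model_mean ν κ φ hφmeas Cφ hC fdag σ hσ hmean hvar B hB (Sop l)
    have hv := var_bound (ν ⊗ₘ κ) _ hmem fdag n hn
    have hbias := bias_bound e B (Sop l) μe (fun j => s l (μe j)) heig (hSop l) fdag w r R
      (Cq r * l ^ r) (fun j => hqual r hr.le hrq l hl j) hR hsource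
    have hsE : ∀ j, |s l (μe j)| ≤ E / l := by
      intro j
      rw [le_div_iff₀ hl]
      have := hE l hl j
      rw [abs_mul, abs_of_pos hl] at this
      linarith
    obtain ⟨hsum, hts⟩ := hL l hl (fun j => s l (μe j) ^ 2 * μe j)
      (fun j => mul_nonneg (sq_nonneg _) (hμnonneg j))
      (fun j => by
        have h1 : s l (μe j) ^ 2 * μe j = |μe j * s l (μe j)| * |s l (μe j)| := by
          rw [abs_mul, abs_of_nonneg (hμnonneg j), ← sq_abs]; ring
        rw [h1, mul_div_assoc]
        exact mul_le_mul (hD l hl j) (hsE j) (abs_nonneg _) hD0)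
      (fun j => by
        have h1 : s l (μe j) ^ 2 ≤ (E / l) ^ 2 := by
          rw [← sq_abs]
          exact pow_le_pow_left₀ (abs_nonneg _) (hsE j) 2
        have h2 : E ^ 2 * d / l ^ 2 * ((j : ℝ) + 1) ^ (-b) =
            (E / l) ^ 2 * (d / ((j : ℝ) + 1) ^ b) := by
          rw [Real.rpow_neg (by positivity)]
          field_simp
        rw [h2]
        exact mul_le_mul h1 (hdecay j) (hμnonneg j) (by positivity))
    have hns := integral_norm_sq ν φ hφmeas Cφ hC e B (Sop l) μe (fun j => s l (μe j)) heig
      (hSop l) hB hsum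
    rw [hmn] at hv
    rw [hns] at hle
    have hz : ∀ z : Fin n → X × ℝ, Sop l ((n : ℝ)⁻¹ • ∑ i, (z i).2 • φ (z i).1) =
        (n : ℝ)⁻¹ • ∑ i, Sop l ((z i).2 • φ (z i).1) := by
      intro z
      rw [map_smul, map_sum]
    simp_rw [hz]
    refine hv.trans (add_le_add (hbias.trans (le_of_eq ?_)) ?_)
    · rw [mul_pow, mul_comm 2 r, Real.rpow_mul hl.le]
      norm_cast
    · calc (n : ℝ)⁻¹ * _ ≤ (n : ℝ)⁻¹ * ((σ ^ 2 + (‖fdag‖ * Cφ) ^ 2) *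
            (L * l ^ (-(1 + 1 / b)))) := by
            refine mul_le_mul_of_nonneg_left ?_ (by positivity)
            exact hle.trans (mul_le_mul_of_nonneg_left hts hC0)
        _ = _ := by ring
  refine ⟨⟨_, hC0, L, hL0, main⟩, ?_⟩
  intro lamn hlam hth
  set C := σ ^ 2 + (‖fdag‖ * Cφ) ^ 2 with hCdef
  have hb0 : 0 < b := by linarith
  have hβ : 0 < 1 + 1 / b := by positivity
  set α := 1 / (2 * r + 1 + 1 / b) with hα
  have hden : 0 < 2 * r + 1 + 1 / b := by positivity
  set g : ℕ → ℝ := fun n : ℕ => (n : ℝ) ^ (-(2 * r / (2 * r + 1 + 1 / b))) with hg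
  have o1 : (fun n => lamn n ^ (2 * r)) =O[atTop] g := by
    have := hth.1.rpow (r := 2 * r) (by positivity)
      (Eventually.of_forall fun n => by positivity)
    refine this.congr_right fun n => ?_
    rw [hg]
    simp only
    rw [← Real.rpow_mul (by positivity)]
    congr 1
    rw [hα]; ring
  have o2 : (fun n : ℕ => (n : ℝ)⁻¹ * lamn n ^ (-(1 + 1 / b))) =O[atTop] g := by
    have h1 := hth.inv.1.rpow (r := 1 + 1 / b) hβ.le
      (Eventually.of_forall fun n => by simp only [Pi.zero_apply]; positivity)
    have h2 := (isBigO_refl (fun n : ℕ => (n : ℝ)⁻¹) atTop).mul h1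
    refine (h2.congr_left fun n => ?_).congr' EventuallyEq.rfl ?_
    · rw [Real.inv_rpow (hlam n).le, Real.rpow_neg (hlam n).le]
    · filter_upwards [eventually_gt_atTop 0] with n hn
      have hn' : (0 : ℝ) < n := by exact_mod_cast hn
      rw [hg]
      simp only
      rw [← Real.rpow_neg hn'.le, neg_neg, ← Real.rpow_neg_one, ← Real.rpow_mul hn'.le,
        ← Real.rpow_add hn']
      congr 1
      rw [hα]
      field_simp
      ring
  have o3 : (fun n : ℕ => (Cq r) ^ 2 * R ^ 2 * lamn n ^ (2 * r) +
      C * L * ((n : ℝ)⁻¹ * lamn n ^ (-(1 + 1 / b)))) =O[atTop] g :=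
    (o1.const_mul_left _).add (o2.const_mul_left _)
  refine IsBigO.trans (IsBigO.of_bound 1 ?_) o3
  filter_upwards [eventually_gt_atTop 0] with n hn
  rw [Real.norm_of_nonneg (integral_nonneg fun z => by positivity), one_mul]
  refine (main n hn (lamn n) (hlam n)).trans (le_trans (le_of_eq ?_) (Real.le_norm_self _))
  ring
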